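/- If ω is a real-valued random variable with a density with respect to Lebesgue measure on (0,∞), then the random variable (ωt) mod 2π converges in distribution to the uniform distribution on [0,2π] as t → ∞; equivalently, for every bounded continuous function f on [0,2π], E[f((ωt) mod 2π)] → (1/2π)∫₀^{2π} f(s) ds. -/

import Mathlib

open MeasureTheory Filter Real Set

open scoped Topology

/-- Translation is continuous in `L¹(ℝ)`. -/
theorem MeasureTheory.Integrable.tendsto_integral_abs_translate_sub {h : ℝ → ℝ}
    (hh : Integrable h) :
    Tendsto (fun a : ℝ => ∫ x, |h (x + a) - h x|) (𝓝 0) (𝓝 0) := by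
  have hm : MemLp h 1 := memLp_one_iff_integrable.2 hh
  have : Fact ((1 : ENNReal) ≠ ⊤) := ⟨ENNReal.one_ne_top⟩
  have hc : Continuous fun a : ℝ => DomAddAct.mk a +ᵥ hm.toLp h :=
    (DomAddAct.continuous_mk).vadd continuous_const
  have ht := ((hc.sub (continuous_const (y := hm.toLp h))).norm).tendsto 0
  simp only [Pi.sub_apply, DomAddAct.mk_zero, zero_vadd, sub_self, norm_zero] at ht
  refine ht.congr fun a => ?_
  rw [L1.norm_eq_integral_norm]
  refine integral_congr_ae ?_
  filter_upwards [Lp.coeFn_sub (DomAddAct.mk a +ᵥ hm.toLp h) (hm.toLp h), hm.coeFn_toLp,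
    (hm.comp_measurePreserving (measurePreserving_vadd a volume)).coeFn_toLp] with x h₁ h₂ h₃
  rw [h₁, Pi.sub_apply, h₂, DomAddAct.mk_vadd_toLp]
  refine (congrArg (fun y => ‖y - h x‖) h₃).trans ?_
  simp [add_comm]

/-- Fejér's lemma for a bounded periodic function with mean zero. -/
theorem Function.Periodic.tendsto_integral_mul_comp_mul_atTop {g h : ℝ → ℝ} {T C : ℝ}
    (hg : Function.Periodic g T) (hT : 0 < T) (hgm : Measurable g) (hgC : ∀ x, |g x| ≤ C)
    (hg0 : ∫ s in (0 : ℝ)..T, g s = 0) (hh : Integrable h) :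
    Tendsto (fun t : ℝ => ∫ x, h x * g (x * t)) atTop (𝓝 0) := by
  have hbd : ∀ {k : ℝ → ℝ}, Integrable k → ∀ t s : ℝ,
      Integrable fun x => k x * g (x * t + s) := fun hk t s =>
    hk.mul_bdd (c := C)
      (hgm.comp (by fun_prop : Measurable fun x => x * t + s)).aestronglyMeasurable
      (ae_of_all _ fun x => hgC _)
  have hC : 0 ≤ C := (abs_nonneg _).trans (hgC 0)
  rw [Metric.tendsto_nhds]
  intro ε hε
  obtain ⟨δ, hδ, hδh⟩ := Metric.eventually_nhds_iff.1
    (hh.tendsto_integral_abs_translate_sub.eventually_lt_const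
      (show 0 < ε / (C + 1) by positivity))
  filter_upwards [eventually_gt_atTop (T / δ), eventually_gt_atTop 0] with t ht ht0
  set F := ∫ x, h x * g (x * t) with hF
  have : IsFiniteMeasure (volume.restrict (uIoc 0 T)) := by
    rw [uIoc_of_le hT.le]
    infer_instance
  have hint : Integrable (Function.uncurry fun s x => h x * g (x * t + s))
      ((volume.restrict (uIoc 0 T)).prod volume) :=
    (hh.comp_snd (volume.restrict (uIoc 0 T))).mul_bdd (c := C)
      (hgm.comp (by fun_prop : Measurable fun p : ℝ × ℝ => p.2 * t + p.1)).aestronglyMeasurable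
      (ae_of_all _ fun x => hgC _)
  have hshift : ∀ s ∈ uIoc 0 T, ‖(∫ x, h x * g (x * t + s)) - F‖ ≤ C * (ε / (C + 1)) := by
    intro s hs
    rw [uIoc_of_le hT.le] at hs
    have hFs : F = ∫ x, h (x + s / t) * g (x * t + s) := by
      rw [hF, ← integral_add_right_eq_self _ (s / t)]
      congr! 3 with x
      field_simp
    have hd : Integrable fun x => h (x + s / t) - h x := (hh.comp_add_right _).sub hh
    rw [norm_sub_rev, hFs, ← integral_sub (hbd (hh.comp_add_right _) t s) (hbd hh t s)]
    calc ‖∫ x, (h (x + s / t) * g (x * t + s) - h x * g (x * t + s))‖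
        ≤ ∫ x, C * |h (x + s / t) - h x| := by
          refine norm_integral_le_of_norm_le (hd.abs.const_mul C) (ae_of_all _ fun x => ?_)
          rw [← sub_mul, norm_mul, mul_comm, Real.norm_eq_abs, Real.norm_eq_abs]
          gcongr
          exact hgC _
      _ = C * ∫ x, |h (x + s / t) - h x| := integral_const_mul _ _
      _ ≤ C * (ε / (C + 1)) := by
          gcongr
          refine (hδh ?_).le
          rw [dist_zero_right, Real.norm_eq_abs, abs_of_pos (div_pos hs.1 ht0), div_lt_iff₀ ht0]
          rw [div_lt_iff₀ hδ] at ht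
          linarith [hs.2]
  have hmean : ∫ s in (0 : ℝ)..T, ∫ x, h x * g (x * t + s) = 0 := by
    rw [intervalIntegral_integral_swap hint]
    refine integral_eq_zero_of_ae (ae_of_all _ fun x => ?_)
    have := hg.intervalIntegral_add_eq (x * t) 0
    simp [intervalIntegral.integral_comp_add_left, this, hg0]
  have hK : IntervalIntegrable (fun s => ∫ x, h x * g (x * t + s)) volume 0 T :=
    _root_.intervalIntegrable_iff.2 hint.integral_prod_left
  have key := intervalIntegral.norm_integral_le_of_norm_le_const hshift
  rw [intervalIntegral.integral_sub hK (by simp), hmean, intervalIntegral.integral_const,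
    sub_zero, zero_sub, norm_neg, norm_smul, Real.norm_eq_abs T, mul_comm,
    mul_le_mul_iff_left₀ (abs_pos.2 hT.ne')] at key
  rw [dist_zero_right]
  refine key.trans_lt ?_
  rw [mul_div_assoc', div_lt_iff₀ (by positivity)]
  nlinarith

/-- If ω has a density w.r.t. Lebesgue measure on (0,∞), then (ωt) mod 2π converges
in distribution to the uniform distribution on [0,2π] as t → ∞: for every bounded
continuous f, E[f((ωt) mod 2π)] → (1/2π)∫₀^{2π} f(s) ds. -/
theorem stmt0 {Ω : Type*} [MeasurableSpace Ω] (μ : Measure Ω) [IsProbabilityMeasure μ]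
    (ω : Ω → ℝ) (hω : Measurable ω)
    (hac : μ.map ω ≪ (volume : Measure ℝ).restrict (Set.Ioi 0)) :
    ∀ f : ℝ → ℝ, Continuous f → (∃ C, ∀ x, |f x| ≤ C) →
      Tendsto (fun t : ℝ =>
          ∫ a, f (ω a * t - (2 * π) * ⌊ω a * t / (2 * π)⌋) ∂μ)
        atTop (nhds ((2 * π)⁻¹ * ∫ s in (0:ℝ)..(2 * π), f s)) := by
  rintro f hf ⟨C, hC⟩
  have hac' : μ.map ω ≪ volume := hac.trans Measure.restrict_le_self.absolutelyContinuous
  have : IsProbabilityMeasure (μ.map ω) := Measure.isProbabilityMeasure_map hω.aemeasurable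
  have hπ : 0 < 2 * π := two_pi_pos
  set m := (2 * π)⁻¹ * ∫ s in (0:ℝ)..(2 * π), f s with hm
  set r : ℝ → ℝ := fun y => f (y - (2 * π) * ⌊y / (2 * π)⌋) with hr
  have hrm : Measurable r := hf.measurable.comp (by fun_prop)
  have hrp : Function.Periodic r (2 * π) := fun y => by
    simp only [hr, add_div, div_self hπ.ne', Int.floor_add_one, Int.cast_add, Int.cast_one]
    congr 1
    ring
  have hrint : ∫ s in (0:ℝ)..(2 * π), r s = ∫ s in (0:ℝ)..(2 * π), f s := by
    rw [intervalIntegral.integral_of_le hπ.le, intervalIntegral.integral_of_le hπ.le,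
      integral_Ioc_eq_integral_Ioo, integral_Ioc_eq_integral_Ioo]
    refine setIntegral_congr_fun measurableSet_Ioo fun s hs => ?_
    have : ⌊s / (2 * π)⌋ = 0 :=
      Int.floor_eq_zero_iff.2 ⟨div_nonneg hs.1.le hπ.le, (div_lt_one hπ).2 hs.2⟩
    simp [hr, this]
  have hri : ∀ ν : Measure ℝ, [IsFiniteMeasure ν] → ∀ t : ℝ, Integrable (fun x => r (x * t)) ν :=
    fun ν _ t => .of_bound (hrm.comp (by fun_prop)).aestronglyMeasurable C
      (ae_of_all _ fun x => hC _)
  have hrii : IntervalIntegrable r volume 0 (2 * π) := by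
    rw [intervalIntegrable_iff, uIoc_of_le hπ.le]
    simpa [IntegrableOn] using hri (volume.restrict (Ioc 0 (2 * π))) 1
  have hlim := Function.Periodic.tendsto_integral_mul_comp_mul_atTop (g := fun y => r y - m)
    (h := fun x => ((μ.map ω).rnDeriv volume x).toReal) (T := 2 * π) (C := C + |m|)
    (fun y => by simp only [hrp y]) hπ (hrm.sub_const m)
    (fun x => (abs_sub _ _).trans (by gcongr; exact hC _))
    (by
      rw [intervalIntegral.integral_sub hrii (by simp), hrint, intervalIntegral.integral_const, hm]
      simp only [sub_zero, smul_eq_mul]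
      field_simp
      ring)
    Measure.integrable_toReal_rnDeriv
  rw [← tendsto_sub_nhds_zero_iff]
  refine hlim.congr fun t => ?_
  have hs := integral_rnDeriv_smul (f := fun x => r (x * t) - m) hac'
  simp only [smul_eq_mul] at hs
  rw [hs, integral_sub (hri _ t) (by simp),
    integral_map hω.aemeasurable (hri _ t).aestronglyMeasurable]
  simp [hr]
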